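/- (Theorem 5) Let B be a finite set of terms in CQ normal form. Then it is decidable whether B covers Cantor space. -/

import Mathlib

/-- Terms of the free (quasi-)Cartesian monoid: constants `I, L, R`,
composition `comp` (written `*` in the paper) and pairing `pair`. -/
inductive Term : Type
  | I : Term
  | L : Term
  | R : Term
  | comp : Term → Term → Term
  | pair : Term → Term → Term
  deriving DecidableEq

open Term

/-- The rewrite rules (1)-(7), indexed by their number. -/
inductive Rule : ℕ → Term → Term → Prop
  | r1 (x y : Term) : Rule 1 (comp L (pair x y)) x
  | r2 (x y : Term) : Rule 2 (comp R (pair x y)) y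
  | r3 (x y z : Term) : Rule 3 (comp (pair x y) z) (pair (comp x z) (comp y z))
  | r4 (x : Term) : Rule 4 (comp I x) x
  | r5 (x : Term) : Rule 5 (comp x I) x
  | r6 (x : Term) : Rule 6 (pair (comp L x) (comp R x)) x
  | r7 : Rule 7 (pair L R) I

/-- The congruence generated by associativity of `comp`. -/
inductive AssocEq : Term → Term → Prop
  | assoc (a b c : Term) : AssocEq (comp (comp a b) c) (comp a (comp b c))
  | refl (a : Term) : AssocEq a a
  | symm {a b : Term} : AssocEq a b → AssocEq b a
  | trans {a b c : Term} : AssocEq a b → AssocEq b c → AssocEq a c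
  | comp_congr {a a' b b' : Term} :
      AssocEq a a' → AssocEq b b' → AssocEq (comp a b) (comp a' b')
  | pair_congr {a a' b b' : Term} :
      AssocEq a a' → AssocEq b b' → AssocEq (pair a b) (pair a' b')

/-- One-step rewriting by a rule whose index lies in `J`,
closed under replacement of subterms (monotone closure). -/
inductive Step (J : Set ℕ) : Term → Term → Prop
  | rule {n : ℕ} {x y : Term} : n ∈ J → Rule n x y → Step J x y
  | comp_left {a a' b : Term} : Step J a a' → Step J (comp a b) (comp a' b)
  | comp_right {a b b' : Term} : Step J b b' → Step J (comp a b) (comp a b')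
  | pair_left {a a' b : Term} : Step J a a' → Step J (pair a b) (pair a' b)
  | pair_right {a b b' : Term} : Step J b b' → Step J (pair a b) (pair a b')

/-- One-step rewriting modulo associativity. -/
def StepA (J : Set ℕ) (a b : Term) : Prop :=
  ∃ a' b', AssocEq a a' ∧ Step J a' b' ∧ AssocEq b' b

/-- Many-step rewriting `↠_J`: the monotone reflexive transitive closure of
one-step rewriting by the rules in `J`, modulo associativity. -/
def Red (J : Set ℕ) (a b : Term) : Prop :=
  ∃ c, Relation.ReflTransGen (StepA J) a c ∧ AssocEq c b

/-- `a` is in normal form w.r.t. the rules in `J` (modulo associativity). -/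
def NF (J : Set ℕ) (a : Term) : Prop := ∀ b, ¬ StepA J a b

/-- Rules (1)-(7). -/
def rules17 : Set ℕ := {n | 1 ≤ n ∧ n ≤ 7}
/-- Rules (1)-(5). -/
def rules15 : Set ℕ := {n | 1 ≤ n ∧ n ≤ 5}
/-- Rules (1)-(4). -/
def rules14 : Set ℕ := {n | 1 ≤ n ∧ n ≤ 4}
/-- Rules (5), (6), (7). -/
def rules567 : Set ℕ := {5, 6, 7}

/-- The congruence `=_CM` generated by the Cartesian monoid axioms (i)-(iv)
and the monoid axioms for `comp` with unit `I`. -/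
inductive CMEq : Term → Term → Prop
  | proj_left (f g : Term) : CMEq (comp L (pair f g)) f
  | proj_right (f g : Term) : CMEq (comp R (pair f g)) g
  | lift (f g h : Term) : CMEq (comp (pair f g) h) (pair (comp f h) (comp g h))
  | surj : CMEq (pair L R) I
  | assoc (a b c : Term) : CMEq (comp (comp a b) c) (comp a (comp b c))
  | one_mul (a : Term) : CMEq (comp I a) a
  | mul_one (a : Term) : CMEq (comp a I) a
  | refl (a : Term) : CMEq a a
  | symm {a b : Term} : CMEq a b → CMEq b a
  | trans {a b c : Term} : CMEq a b → CMEq b c → CMEq a c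
  | comp_congr {a a' b b' : Term} :
      CMEq a a' → CMEq b b' → CMEq (comp a b) (comp a' b')
  | pair_congr {a a' b b' : Term} :
      CMEq a a' → CMEq b b' → CMEq (pair a b) (pair a' b')

/-- The congruence `=_CQ` generated by the axioms (i)-(iii)
and the monoid axioms (no surjectivity `⟨L,R⟩ = I`). -/
inductive CQEq : Term → Term → Prop
  | proj_left (f g : Term) : CQEq (comp L (pair f g)) f
  | proj_right (f g : Term) : CQEq (comp R (pair f g)) g
  | lift (f g h : Term) : CQEq (comp (pair f g) h) (pair (comp f h) (comp g h))
  | assoc (a b c : Term) : CQEq (comp (comp a b) c) (comp a (comp b c))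
  | one_mul (a : Term) : CQEq (comp I a) a
  | mul_one (a : Term) : CQEq (comp a I) a
  | refl (a : Term) : CQEq a a
  | symm {a b : Term} : CQEq a b → CQEq b a
  | trans {a b c : Term} : CQEq a b → CQEq b c → CQEq a c
  | comp_congr {a a' b b' : Term} :
      CQEq a a' → CQEq b b' → CQEq (comp a b) (comp a' b')
  | pair_congr {a a' b b' : Term} :
      CQEq a a' → CQEq b b' → CQEq (pair a b) (pair a' b')

/-- An injective numerical encoding of terms, used to state computability. -/
def encodeTerm : Term → ℕ
  | I => 0
  | L => 1
  | R => 2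
  | comp a b => 2 * Nat.pair (encodeTerm a) (encodeTerm b) + 3
  | pair a b => 2 * Nat.pair (encodeTerm a) (encodeTerm b) + 4

/-- A numerical encoding of finite lists of terms. -/
def encodeTermList : List Term → ℕ
  | [] => 0
  | a :: l => Nat.pair (encodeTerm a) (encodeTermList l) + 1

/-- The product of a list of terms (with `I` as the empty product). -/
def listProd : List Term → Term
  | [] => I
  | a :: l => comp a (listProd l)

/-- `=_CQ` as a setoid. -/
def cqSetoid : Setoid Term :=
  ⟨CQEq, ⟨fun a => CQEq.refl a, fun h => h.symm, fun h₁ h₂ => h₁.trans h₂⟩⟩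

/-- The free categorical quasiproduct monoid `CQ = T / =_CQ`. -/
def CQ : Type := Quotient cqSetoid

/-- `=_CM` as a setoid. -/
def cmSetoid : Setoid Term :=
  ⟨CMEq, ⟨fun a => CMEq.refl a, fun h => h.symm, fun h₁ h₂ => h₁.trans h₂⟩⟩

/-- The free Cartesian monoid `CM = T / =_CM`. -/
def CM : Type := Quotient cmSetoid

/-- The submonoid of `CQ` generated by (the classes of) the members of `B`,
as a set of elements of `CQ`. -/
def genSubmonoidCQ (B : List Term) : Set CQ :=
  {x | ∃ l : List Term, (∀ t ∈ l, t ∈ B) ∧ Quotient.mk cqSetoid (listProd l) = x}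

/-- The submonoid of `CM` generated by (the classes of) the members of `B`,
as a set of elements of `CM`. -/
def genSubmonoidCM (B : List Term) : Set CM :=
  {x | ∃ l : List Term, (∀ t ∈ l, t ∈ B) ∧ Quotient.mk cmSetoid (listProd l) = x}

/-- A shift: a product (under `comp`) of copies of `L` and `R`,
with `I` as the empty product. -/
inductive IsShift : Term → Prop
  | unit : IsShift I
  | left : IsShift L
  | right : IsShift R
  | comp {s t : Term} : IsShift s → IsShift t → IsShift (comp s t)

/-- The CQ normal form (normal form w.r.t. rules (1)-(5)) of `X` is a shift. -/
def nfIsShift (X : Term) : Prop :=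
  ∃ N, Red rules15 X N ∧ NF rules15 N ∧ IsShift N

/-- The product `F_0 * ⋯ * F_{n-1}` of the first `n` values of a sequence. -/
def prodTake (f : ℕ → Term) (n : ℕ) : Term := listProd ((List.range n).map f)

/-- `B` covers Cantor space: there is an infinite sequence of members of `B`
such that for each shift `S` some finite initial product composed with `S`
has a CQ normal form that is not a shift. -/
def Covers (B : List Term) : Prop :=
  ∃ f : ℕ → Term, (∀ n, f n ∈ B) ∧
    ∀ S, IsShift S → ∃ n, ¬ nfIsShift (comp S (prodTake f n))

/-- The shift `S` is bad for `B`: for every finite sequence of members of `B`,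
the CQ normal form of `S*F_1*⋯*F_n` is a shift. -/
def BadFor (B : List Term) (S : Term) : Prop :=
  ∀ l : List Term, (∀ t ∈ l, t ∈ B) → nfIsShift (comp S (listProd l))

/-- The length of a shift: the number of occurrences of `L` and `R`. -/
def lenLR : Term → ℕ
  | I => 0
  | L => 1
  | R => 1
  | comp a b => lenLR a + lenLR b
  | pair a b => lenLR a + lenLR b

/-- `S` is extenuative for `B`: it is bad for `B` and the CQ normal forms of
`S*F_1*⋯*F_k` (for `F_i` in `B`) have unbounded length. -/
def Extenuative (B : List Term) (S : Term) : Prop :=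
  BadFor B S ∧ ∀ n : ℕ, ∃ l : List Term, (∀ t ∈ l, t ∈ B) ∧
    ∃ N, Red rules15 (comp S (listProd l)) N ∧ NF rules15 N ∧ n ≤ lenLR N

/-- A term represents a right invertible element of CM. -/
def RightInvCM (F : Term) : Prop := ∃ G, CMEq (comp F G) I

/-!
Write shifts as words over `{L, R}`. A term acts on them partially by `S ↦ S * F`, defined when the
normal form is again a shift, and this partial map is one step of a finite prefix rewriting system,
undefined exactly at the proper prefixes of left-hand sides (the short words). Merging the systems
of the members of `B`, a word is mortal if it can be rewritten to a short word, that is, if some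
product of members of `B` is undefined at it. If every word is mortal then, by the Baire category
theorem, a single infinite sequence kills all words, so `B` covers Cantor space precisely when every
word is mortal.

Reading a word letter by letter, and reducing to a short word whenever possible, shows that it is
enough to check the finitely many words `x ++ [c]` with `x` short. Which short words these reach is
the least solution of finitely many closure conditions: such a word is mortal if and only if every
table closed under the conditions takes it to some short word, and there are finitely many tables.
-/

/-- A finite prefix rewriting system on words over `α`: the rule `(p, u)` rewrites `p ++ v` to
`u ++ v` for every word `v`. -/
abbrev PrefixSystem (α : Type*) := List (List α × List α)

namespace PrefixSystem

/-- One-step rewriting: some rule of `S` is applied at the front of `w`. -/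
def Rewrites {α : Type*} (S : PrefixSystem α) (w w' : List α) : Prop :=
  ∃ r ∈ S, ∃ v, w = r.1 ++ v ∧ w' = r.2 ++ v

/-- Many-step rewriting. -/
def Reaches {α : Type*} (S : PrefixSystem α) : List α → List α → Prop :=
  Relation.ReflTransGen S.Rewrites

/-- The proper prefixes of a word. -/
def properPrefixes {α : Type*} (w : List α) : List (List α) :=
  (List.range w.length).map fun n => w.take n

/-- The words too short for some rule of `S`, i.e. the proper prefixes of its left-hand sides. -/
def shortWords {α : Type*} (S : PrefixSystem α) : List (List α) :=
  S.flatMap fun r => properPrefixes r.1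

/-- A word is mortal if it can be rewritten to a short word. -/
def Mortal {α : Type*} (S : PrefixSystem α) (w : List α) : Prop :=
  ∃ y ∈ S.shortWords, S.Reaches w y

section Basic

variable {α : Type*} {S : PrefixSystem α} {w w' x y z : List α}

theorem mem_properPrefixes : x ∈ properPrefixes w ↔ ∃ y ≠ [], w = x ++ y := by
  simp only [properPrefixes, List.mem_map, List.mem_range]
  constructor
  · rintro ⟨n, hn, rfl⟩
    exact ⟨w.drop n, by simpa using hn, (w.take_append_drop n).symm⟩
  · rintro ⟨y, hy, rfl⟩
    exact ⟨x.length, by simpa [List.length_pos_iff] using hy, by simp⟩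

theorem mem_shortWords : x ∈ S.shortWords ↔ ∃ r ∈ S, ∃ y ≠ [], r.1 = x ++ y := by
  simp only [shortWords, List.mem_flatMap, mem_properPrefixes]

theorem mem_shortWords_of_append (h : x ++ y ∈ S.shortWords) : x ∈ S.shortWords := by
  obtain ⟨r, hr, z, hz, e⟩ := mem_shortWords.1 h
  exact mem_shortWords.2 ⟨r, hr, y ++ z, by simp [hz], by simp [e]⟩

theorem nil_mem_shortWords (h : y ∈ S.shortWords) : [] ∈ S.shortWords :=
  mem_shortWords_of_append (x := []) h

theorem Rewrites.append_right (h : S.Rewrites w w') (z : List α) :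
    S.Rewrites (w ++ z) (w' ++ z) := by
  obtain ⟨r, hr, v, rfl, rfl⟩ := h
  exact ⟨r, hr, v ++ z, by simp, by simp⟩

theorem Reaches.append_right (h : S.Reaches w w') (z : List α) :
    S.Reaches (w ++ z) (w' ++ z) :=
  Relation.ReflTransGen.lift (· ++ z) (fun _ _ h => Rewrites.append_right h z) _ _ h

theorem Rewrites.exists_shortWord_concat (h : S.Rewrites w w') (hw : w ≠ [])
    (hnil : [] ∈ S.shortWords) :
    ∃ x ∈ S.shortWords, ∃ c u v, w = x ++ [c] ++ v ∧ w' = u ++ v ∧ S.Rewrites (x ++ [c]) u := by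
  obtain ⟨r, hr, v, rfl, rfl⟩ := h
  rcases List.eq_nil_or_concat r.1 with hp | ⟨x, c, hp⟩
  · obtain ⟨c, v, rfl⟩ := List.exists_cons_of_ne_nil (l := v) (by simpa [hp] using hw)
    exact ⟨[], hnil, c, r.2 ++ [c], v, by simp [hp], by simp, r, hr, [c], by simp [hp], rfl⟩
  · exact ⟨x, mem_shortWords.2 ⟨r, hr, [c], by simp, by simp [hp]⟩, c, r.2, v, by simp [hp], rfl,
      r, hr, [], by simp [hp], by simp⟩

end Basic

section Boundary

variable {α : Type*} [Fintype α]

/-- The extensions of short words by one letter: the words at which a word growing letter by letter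
may cease to be short. -/
noncomputable def boundary (S : PrefixSystem α) : List (List α) :=
  S.shortWords.flatMap fun x => Finset.univ.toList.map fun c => x ++ [c]

/-- The pairs of a boundary word and a short word: all possible entries of a table, see `run`. -/
noncomputable def candidates (S : PrefixSystem α) : PrefixSystem α :=
  S.boundary.flatMap fun p => S.shortWords.map fun y => (p, y)

variable {S : PrefixSystem α} {p y : List α}

theorem mem_boundary : p ∈ S.boundary ↔ ∃ x ∈ S.shortWords, ∃ c, p = x ++ [c] := by
  simp [boundary, eq_comm]

theorem mk_mem_candidates : (p, y) ∈ S.candidates ↔ p ∈ S.boundary ∧ y ∈ S.shortWords := by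
  simp [candidates]

theorem forall_mortal_iff_boundary :
    (∀ w, S.Mortal w) ↔ [] ∈ S.shortWords ∧ ∀ p ∈ S.boundary, S.Mortal p := by
  constructor
  · intro h
    obtain ⟨y, hy, -⟩ := h []
    exact ⟨nil_mem_shortWords hy, fun p _ => h p⟩
  · rintro ⟨hnil, h⟩ w
    induction w using List.reverseRecOn with
    | nil => exact ⟨[], hnil, .refl⟩
    | append_singleton w c ih =>
      obtain ⟨x, hx, hwx⟩ := ih
      obtain ⟨y, hy, hxy⟩ := h _ (mem_boundary.2 ⟨x, hx, c, rfl⟩)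
      exact ⟨y, hy, (hwx.append_right [c]).trans hxy⟩

end Boundary

section Saturation

variable {α : Type*} [DecidableEq α]

/-- A table `T` of pairs `(x ++ [c], y)` read as a nondeterministic automaton with initial state
`[]` and a transition from `x` to `y` labelled `c`: the list of states reached on reading `w`. -/
def run (T : PrefixSystem α) (w : List α) : List (List α) :=
  w.foldl (fun Q c => Q.flatMap fun x =>
    T.filterMap fun t => if t.1 = x ++ [c] then some t.2 else none) [[]]

/-- A table is saturated if it relates each boundary word to itself, in case it is short, and to
every short word that the table already lets one of its one-step reducts reach. -/
def Saturated [Fintype α] (S T : PrefixSystem α) : Prop :=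
  ∀ p ∈ S.boundary, ∀ y ∈ S.shortWords, (p = y ∨ ∃ u, S.Rewrites p u ∧ y ∈ run T u) → (p, y) ∈ T

variable {S T : PrefixSystem α} {w w' x y p : List α} {c : α}

theorem mem_run_concat : y ∈ run T (w ++ [c]) ↔ ∃ x ∈ run T w, (x ++ [c], y) ∈ T := by
  simp only [run, List.foldl_append, List.foldl_cons, List.foldl_nil, List.mem_flatMap,
    List.mem_filterMap, Option.ite_none_right_eq_some, Option.some.injEq, Prod.exists]
  grind

theorem run_append_subset (h : run T w ⊆ run T w') (v : List α) :
    run T (w ++ v) ⊆ run T (w' ++ v) := by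
  induction v using List.reverseRecOn with
  | nil => simpa using h
  | append_singleton v c ih =>
    intro y hy
    rw [← List.append_assoc, mem_run_concat] at hy ⊢
    exact hy.imp fun x hx => ⟨ih hx.1, hx.2⟩

theorem reaches_of_mem_run (hT : ∀ t ∈ T, S.Reaches t.1 t.2) :
    ∀ {w y : List α}, y ∈ run T w → S.Reaches w y := by
  intro w
  induction w using List.reverseRecOn with
  | nil =>
    intro y hy
    obtain rfl : y = [] := by simpa [run] using hy
    exact .refl
  | append_singleton w c ih =>
    intro y hy
    obtain ⟨x, hx, ht⟩ := mem_run_concat.1 hy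
    exact ((ih hx).append_right [c]).trans (hT _ ht)

variable [Fintype α]

theorem mem_shortWords_of_mem_run (hT : T ⊆ S.candidates) (hnil : [] ∈ S.shortWords)
    (hy : y ∈ run T w) : y ∈ S.shortWords := by
  induction w using List.reverseRecOn with
  | nil => simp_all [run]
  | append_singleton w c _ =>
    obtain ⟨x, -, ht⟩ := mem_run_concat.1 hy
    exact (mk_mem_candidates.1 (hT ht)).2

namespace Saturated

theorem mem_run_self (hT : S.Saturated T) (hx : x ∈ S.shortWords) : x ∈ run T x := by
  induction x using List.reverseRecOn with
  | nil => simp [run]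
  | append_singleton x c ih =>
    have hx' := mem_shortWords_of_append hx
    exact mem_run_concat.2
      ⟨x, ih hx', hT _ (mem_boundary.2 ⟨x, hx', c, rfl⟩) _ hx (.inl rfl)⟩

theorem run_subset_of_rewrites (hT : S.Saturated T) (hTS : T ⊆ S.candidates)
    (hnil : [] ∈ S.shortWords) (h : S.Rewrites w w') (hw : w ≠ []) : run T w' ⊆ run T w := by
  obtain ⟨x, hx, c, u, v, rfl, rfl, hu⟩ := h.exists_shortWord_concat hw hnil
  refine run_append_subset (fun y hy => mem_run_concat.2 ⟨x, hT.mem_run_self hx, ?_⟩) v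
  exact hT _ (mem_boundary.2 ⟨x, hx, c, rfl⟩) y (mem_shortWords_of_mem_run hTS hnil hy)
    (.inr ⟨u, hu, hy⟩)

theorem run_ne_nil_of_mortal (hT : S.Saturated T) (hTS : T ⊆ S.candidates) (h : S.Mortal w) :
    run T w ≠ [] := by
  obtain ⟨y, hy, h⟩ := h
  induction h using Relation.ReflTransGen.head_induction_on with
  | refl => exact List.ne_nil_of_mem (hT.mem_run_self hy)
  | @head w w' h _ ih =>
    by_cases hw : w = []
    · simp [hw, run]
    · exact fun h₀ => ih <| List.subset_nil.1 <|
        h₀ ▸ hT.run_subset_of_rewrites hTS (nil_mem_shortWords hy) h hw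

end Saturated

open Classical in
/-- The table of all true reachability facts is saturated, and every saturated table contains
enough of it to recognise mortality. -/
theorem forall_mortal_iff_forall_saturated :
    (∀ w, S.Mortal w) ↔ [] ∈ S.shortWords ∧
      ∀ T ∈ S.candidates.sublists, S.Saturated T → ∀ p ∈ S.boundary, run T p ≠ [] := by
  rw [forall_mortal_iff_boundary]
  refine and_congr_right fun hnil => ⟨fun h T hT hsat p hp =>
    hsat.run_ne_nil_of_mortal (List.mem_sublists.1 hT).subset (h p hp), fun h p hp => ?_⟩
  let T := S.candidates.filter fun t => S.Reaches t.1 t.2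
  have hTS : T.Sublist S.candidates := List.filter_sublist
  have hsound : ∀ t ∈ T, S.Reaches t.1 t.2 := fun t ht => by simpa using (List.mem_filter.1 ht).2
  have hsat : S.Saturated T := by
    intro p hp y hy h
    refine List.mem_filter.2 ⟨mk_mem_candidates.2 ⟨hp, hy⟩, decide_eq_true ?_⟩
    rcases h with rfl | ⟨u, hu, hy⟩
    · exact .refl
    · exact .head hu (reaches_of_mem_run hsound hy)
  obtain ⟨y, hy⟩ := List.exists_mem_of_ne_nil _ (h T (List.mem_sublists.2 hTS) hsat p hp)
  exact ⟨y, mem_shortWords_of_mem_run hTS.subset hnil hy, reaches_of_mem_run hsound hy⟩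

end Saturation

end PrefixSystem

section PrimitiveRecursion

variable {α β : Type*} [Primcodable α] [Primcodable β]

theorem primrecPred_exists_mem {f : α → List β} {Q : α → β → Prop}
    (hf : Primrec f) (hQ : PrimrecRel Q) : PrimrecPred fun a => ∃ b ∈ f a, Q a b :=
  PrimrecRel.exists_mem_list (R := fun b a => Q a b) (hQ.comp Primrec.snd Primrec.fst)
    |>.comp hf Primrec.id

theorem primrecPred_forall_mem {f : α → List β} {Q : α → β → Prop}
    (hf : Primrec f) (hQ : PrimrecRel Q) : PrimrecPred fun a => ∀ b ∈ f a, Q a b :=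
  PrimrecRel.forall_mem_list (R := fun b a => Q a b) (hQ.comp Primrec.snd Primrec.fst)
    |>.comp hf Primrec.id

theorem primrecRel_mem : PrimrecRel fun (a : α) (l : List α) => a ∈ l :=
  (primrecPred_exists_mem (Q := fun (q : α × List α) b => b = q.1) Primrec.snd
    (Primrec.eq.comp Primrec.snd (Primrec.fst.comp Primrec.fst))).of_eq fun q => by simp

theorem primrecPred_imp {p q : α → Prop} (hp : PrimrecPred p) (hq : PrimrecPred q) :
    PrimrecPred fun a => p a → q a :=
  (hp.not.or hq).of_eq fun _ => imp_iff_not_or.symm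

theorem dropPrefix?_eq_some_iff_eq_append {γ : Type*} [BEq γ] [LawfulBEq γ] {w p x : List γ} :
    w.dropPrefix? p = some x ↔ w = p ++ x := by
  simp [List.dropPrefix?_eq_some_iff]

open Primrec in
theorem primrec_dropPrefix? [DecidableEq α] :
    Primrec₂ (List.dropPrefix? : List α → List α → Option (List α)) := by
  have h : Primrec₂ fun w p : List α =>
      if w.take p.length = p then some (w.drop p.length) else none :=
    .ite (Primrec.eq.comp (list_take.comp (list_length.comp snd) fst) snd)
      (option_some.comp (list_drop.comp (list_length.comp snd) fst)) (const none)
  refine h.of_eq fun w p => Option.ext fun x => ?_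
  rw [dropPrefix?_eq_some_iff_eq_append, Option.ite_none_right_eq_some, Option.some.injEq]
  constructor
  · rintro ⟨hp, rfl⟩
    conv_lhs => rw [← w.take_append_drop p.length, hp]
  · rintro rfl
    simp

open Primrec in
theorem primrec_sublists : Primrec (List.sublists : List α → List (List α)) := by
  have h : Primrec fun l : List α =>
      l.foldr (fun a acc => acc.flatMap fun x => [x, a :: x]) [[]] :=
    list_foldr (h := fun _ (q : α × List (List α)) => q.2.flatMap fun x => [x, q.1 :: x])
      Primrec.id (const [[]])
      (list_flatMap (snd.comp snd) (list_cons.comp snd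
        (list_cons.comp (list_cons.comp (fst.comp (snd.comp fst)) snd) (const []))))
  exact h

end PrimitiveRecursion

namespace PrefixSystem

variable {α : Type*}

/-- The one-step reducts of a word. -/
def successors [DecidableEq α] (S : PrefixSystem α) (w : List α) : List (List α) :=
  S.filterMap fun r => (w.dropPrefix? r.1).map (r.2 ++ ·)

theorem mem_successors [DecidableEq α] {S : PrefixSystem α} {w w' : List α} :
    w' ∈ S.successors w ↔ S.Rewrites w w' := by
  simp only [successors, Rewrites, List.mem_filterMap, Option.map_eq_some_iff,
    dropPrefix?_eq_some_iff_eq_append, eq_comm (a := w')]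

variable [Primcodable α]

open Primrec

theorem primrec_properPrefixes : Primrec (properPrefixes : List α → List (List α)) :=
  list_map (list_range.comp list_length) (list_take.comp snd fst)

theorem primrec_shortWords : Primrec (shortWords : PrefixSystem α → List (List α)) :=
  list_flatMap Primrec.id (primrec_properPrefixes.comp (fst.comp snd))

theorem primrec_successors [DecidableEq α] :
    Primrec₂ (successors : PrefixSystem α → List α → List (List α)) :=
  listFilterMap fst <| option_map (primrec_dropPrefix?.comp (snd.comp fst) (fst.comp snd))
    (list_append.comp (snd.comp (snd.comp fst)) snd)

theorem primrec_run [DecidableEq α] :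
    Primrec₂ (run : PrefixSystem α → List α → List (List α)) := by
  have hentry : Primrec₂ fun (q : List α × α) (t : List α × List α) =>
      if t.1 = q.1 ++ [q.2] then some t.2 else none :=
    .ite (Primrec.eq.comp (fst.comp snd) (list_concat.comp (fst.comp fst) (snd.comp fst)))
      (option_some.comp (snd.comp snd)) (const none)
  have hstep : Primrec₂ fun (T : PrefixSystem α) (q : List (List α) × α) =>
      q.1.flatMap fun x => T.filterMap fun t => if t.1 = x ++ [q.2] then some t.2 else none :=
    list_flatMap (fst.comp snd) <| listFilterMap (fst.comp fst) <|
      hentry.comp (Primrec.pair (snd.comp fst) (snd.comp (snd.comp (fst.comp fst)))) snd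
  exact list_foldl snd (const [[]]) (hstep.comp (fst.comp fst) snd).to₂

section Fintype

variable [Fintype α]

theorem primrec_boundary : Primrec (boundary : PrefixSystem α → List (List α)) :=
  list_flatMap primrec_shortWords <| list_map (const _) (list_concat.comp (snd.comp fst) snd)

theorem primrec_candidates : Primrec (candidates : PrefixSystem α → PrefixSystem α) :=
  list_flatMap primrec_boundary <|
    list_map (primrec_shortWords.comp fst) (Primrec.pair (snd.comp fst) snd)

theorem primrecRel_saturated [DecidableEq α] :
    PrimrecRel (Saturated : PrefixSystem α → PrefixSystem α → Prop) := by
  have hreach : PrimrecPred fun q : ((PrefixSystem α × PrefixSystem α) × List α) × List α =>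
      ∃ u ∈ q.1.1.1.successors q.1.2, q.2 ∈ run q.1.1.2 u :=
    primrecPred_exists_mem
      (primrec_successors.comp (fst.comp (fst.comp fst)) (snd.comp fst))
      (primrecRel_mem.comp (snd.comp fst)
        (primrec_run.comp (snd.comp (fst.comp (fst.comp fst))) snd))
  simp only [mem_successors] at hreach
  exact primrecPred_forall_mem (primrec_boundary.comp fst) <|
    primrecPred_forall_mem (primrec_shortWords.comp (fst.comp fst)) <|
      primrecPred_imp ((Primrec.eq.comp (snd.comp fst) snd).or hreach)
        (primrecRel_mem.comp (Primrec.pair (snd.comp fst) snd) (snd.comp (fst.comp fst)))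

end Fintype

theorem primrecPred_forall_mortal [Finite α] :
    PrimrecPred fun S : PrefixSystem α => ∀ w, S.Mortal w := by
  classical
  have := Fintype.ofFinite α
  simp only [forall_mortal_iff_forall_saturated]
  refine (primrecRel_mem.comp (const []) primrec_shortWords).and <|
    primrecPred_forall_mem (primrec_sublists.comp primrec_candidates) <|
      primrecPred_imp primrecRel_saturated <|
        primrecPred_forall_mem (primrec_boundary.comp fst) ?_
  exact (Primrec.eq.comp (primrec_run.comp (snd.comp fst) snd) (const [])).not

section Composition

variable {α : Type*} {S T : PrefixSystem α} {f g : List α → Option (List α)} {w w' : List α}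

/-- A prefix system computes a partial map on words if its rewriting relation is the graph of that
map and its short words are exactly those where the map is undefined. -/
def Computes (S : PrefixSystem α) (f : List α → Option (List α)) : Prop :=
  ∀ w, (f w = none ↔ w ∈ S.shortWords) ∧ ∀ w', f w = some w' ↔ S.Rewrites w w'

/-- The composition of prefix systems, `S` first: the overlaps of a right-hand side of `S` with a
left-hand side of `T`. -/
def compose [DecidableEq α] (S T : PrefixSystem α) : PrefixSystem α :=
  S.flatMap fun r => T.flatMap fun s =>
    ((r.2.dropPrefix? s.1).map fun x => (r.1, s.2 ++ x)).toList ++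
      ((s.1.dropPrefix? r.2).map fun y => (r.1 ++ y, s.2)).toList

theorem computes_prepend (u : List α) : Computes [([], u)] fun w => some (u ++ w) := by
  intro w
  simp [mem_shortWords, Rewrites, eq_comm]

theorem mem_compose [DecidableEq α] {c : List α × List α} :
    c ∈ S.compose T ↔ ∃ r ∈ S, ∃ s ∈ T,
      (∃ x, r.2 = s.1 ++ x ∧ c = (r.1, s.2 ++ x)) ∨ ∃ y, s.1 = r.2 ++ y ∧ c = (r.1 ++ y, s.2) := by
  simp only [compose, List.mem_flatMap, List.mem_append, Option.mem_toList, Option.map_eq_some_iff,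
    dropPrefix?_eq_some_iff_eq_append, eq_comm (b := c)]

theorem rewrites_compose [DecidableEq α] :
    (S.compose T).Rewrites w w' ↔ ∃ w₁, S.Rewrites w w₁ ∧ T.Rewrites w₁ w' := by
  constructor
  · rintro ⟨c, hc, v, rfl, rfl⟩
    obtain ⟨r, hr, s, hs, ⟨x, hx, rfl⟩ | ⟨y, hy, rfl⟩⟩ := mem_compose.1 hc
    · exact ⟨r.2 ++ v, ⟨r, hr, v, rfl, rfl⟩, s, hs, x ++ v, by simp [hx], by simp⟩
    · exact ⟨s.1 ++ v, ⟨r, hr, y ++ v, by simp, by simp [hy]⟩, s, hs, v, rfl, rfl⟩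
  · rintro ⟨_, ⟨r, hr, v, rfl, rfl⟩, s, hs, v', h, rfl⟩
    rcases List.append_eq_append_iff.1 h with ⟨y, hy, rfl⟩ | ⟨x, hx, rfl⟩
    · exact ⟨_, mem_compose.2 ⟨r, hr, s, hs, .inr ⟨y, hy, rfl⟩⟩, v', by simp, rfl⟩
    · exact ⟨_, mem_compose.2 ⟨r, hr, s, hs, .inl ⟨x, hx, rfl⟩⟩, v, rfl, by simp⟩

theorem mem_shortWords_compose [DecidableEq α]
    (hT : ∀ w, w ∈ T.shortWords ∨ ∃ w', T.Rewrites w w') :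
    w ∈ (S.compose T).shortWords ↔
      w ∈ S.shortWords ∨ ∃ w₁, S.Rewrites w w₁ ∧ w₁ ∈ T.shortWords := by
  simp only [mem_shortWords (S := S.compose T)]
  constructor
  · rintro ⟨c, hc, z, hz, h⟩
    obtain ⟨r, hr, s, hs, ⟨x, -, rfl⟩ | ⟨y, hy, rfl⟩⟩ := mem_compose.1 hc
    · exact .inl (mem_shortWords.2 ⟨r, hr, z, hz, h⟩)
    · rcases List.append_eq_append_iff.1 h with ⟨x, rfl, rfl⟩ | ⟨x, hx, rfl⟩
      · exact .inr ⟨r.2 ++ x, ⟨r, hr, x, rfl, rfl⟩, mem_shortWords.2 ⟨s, hs, z, hz, by simp [hy]⟩⟩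
      · by_cases hx₀ : x = []
        · exact .inr ⟨r.2, ⟨r, hr, [], by simp [hx, hx₀], by simp⟩,
            mem_shortWords.2 ⟨s, hs, y, by simpa [hx₀] using hz, hy⟩⟩
        · exact .inl (mem_shortWords.2 ⟨r, hr, x, hx₀, hx⟩)
  · rintro (hw | ⟨_, ⟨r, hr, v, rfl, rfl⟩, hw⟩)
    · obtain ⟨r, hr, z, hz, hrz⟩ := mem_shortWords.1 hw
      rcases hT r.2 with h | ⟨_, s, hs, x, hx, -⟩
      · obtain ⟨s, hs, y, -, hy⟩ := mem_shortWords.1 h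
        exact ⟨_, mem_compose.2 ⟨r, hr, s, hs, .inr ⟨y, hy, rfl⟩⟩, z ++ y, by simp [hz],
          by simp [hrz]⟩
      · exact ⟨_, mem_compose.2 ⟨r, hr, s, hs, .inl ⟨x, hx, rfl⟩⟩, z, hz, hrz⟩
    · obtain ⟨s, hs, z, hz, hsz⟩ := mem_shortWords.1 hw
      exact ⟨_, mem_compose.2 ⟨r, hr, s, hs, .inr ⟨v ++ z, by simp [hsz], rfl⟩⟩, z, hz, by simp⟩

theorem Computes.mem_shortWords_or_rewrites (h : S.Computes f) (w : List α) :
    w ∈ S.shortWords ∨ ∃ w', S.Rewrites w w' := by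
  rcases hw : f w with _ | w'
  · exact .inl ((h w).1.1 hw)
  · exact .inr ⟨w', ((h w).2 w').1 hw⟩

theorem Computes.compose [DecidableEq α] (hS : S.Computes f) (hT : T.Computes g) :
    (S.compose T).Computes fun w => (f w).bind g := by
  intro w
  refine ⟨?_, fun w' => ?_⟩
  · rw [mem_shortWords_compose hT.mem_shortWords_or_rewrites]
    simp only [← (hS w).1, ← (hS w).2, ← (hT _).1]
    cases f w <;> simp
  · simp only [rewrites_compose, Option.bind_eq_some_iff, (hS w).2, (hT _).2]

end Composition

section Branching

/-- The system that removes the first letter of a word and then acts like `S` or like `T`,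
according as that letter is `true` or `false`. -/
def branch (S T : PrefixSystem Bool) : PrefixSystem Bool :=
  S.map (fun r => (true :: r.1, r.2)) ++ T.map fun r => (false :: r.1, r.2)

variable {S T : PrefixSystem Bool} {w w' : List Bool}

theorem exists_mem_branch {P : List Bool × List Bool → Prop} :
    (∃ c ∈ S.branch T, P c) ↔
      (∃ r ∈ S, P (true :: r.1, r.2)) ∨ ∃ r ∈ T, P (false :: r.1, r.2) := by
  simp only [branch, List.mem_append, or_and_right, exists_or, List.mem_map,
    exists_exists_and_eq_and]

theorem Computes.branch {f g h : List Bool → Option (List Bool)} (hS : S.Computes f)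
    (hT : T.Computes g) (hnil : h [] = none) (htrue : ∀ w, h (true :: w) = f w)
    (hfalse : ∀ w, h (false :: w) = g w) : (S.branch T).Computes h := by
  rintro (_ | ⟨_ | _, w⟩)
  · obtain ⟨r, hr⟩ : ∃ r, r ∈ S := (hS.mem_shortWords_or_rewrites []).elim
      (fun h => (mem_shortWords.1 h).imp fun _ => And.left) fun ⟨_, h⟩ => h.imp fun _ => And.left
    have : [] ∈ (S.branch T).shortWords :=
      mem_shortWords.2 (exists_mem_branch.2 (.inl ⟨r, hr, _, by simp, rfl⟩))
    simp only [hnil, this, Rewrites, exists_mem_branch]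
    simp
  · simp only [hfalse, (hT w).1, (hT w).2, mem_shortWords, Rewrites, exists_mem_branch]
    simp
  · simp only [htrue, (hS w).1, (hS w).2, mem_shortWords, Rewrites, exists_mem_branch]
    simp

end Branching

end PrefixSystem

namespace Term

/-- The action of a term on shifts, a shift being written as the word of its letters from right to
left, with `true` for `L` and `false` for `R`: `act X w = some w'` means that the CQ normal form of
the product of `w` and `X` is the shift `w'`, and `act X w = none` that it is not a shift. -/
def act : Term → List Bool → Option (List Bool)
  | I, w => some w
  | L, w => some (true :: w)
  | R, w => some (false :: w)
  | comp a b, w => (act a w).bind (act b)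
  | pair _ _, [] => none
  | pair a _, true :: w => act a w
  | pair _ b, false :: w => act b w

/-- The prefix system that computes the action of a term. -/
def rules : Term → PrefixSystem Bool
  | I => [([], [])]
  | L => [([], [true])]
  | R => [([], [false])]
  | comp a b => (rules a).compose (rules b)
  | pair a b => (rules a).branch (rules b)

theorem rules_computes : ∀ t : Term, (rules t).Computes (act t)
  | I => PrefixSystem.computes_prepend []
  | L => PrefixSystem.computes_prepend [true]
  | R => PrefixSystem.computes_prepend [false]
  | comp a b => (rules_computes a).compose (rules_computes b)
  | pair a b => (rules_computes a).branch (rules_computes b) rfl (fun _ => rfl) fun _ => rfl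

theorem act_comp (a b : Term) (w : List Bool) : act (comp a b) w = (act a w).bind (act b) := rfl

theorem act_pair_congr {a a' b b' : Term} (ha : act a = act a') (hb : act b = act b') :
    act (pair a b) = act (pair a' b') := by
  funext w
  rcases w with _ | ⟨_ | _, w⟩
  exacts [rfl, congrFun hb w, congrFun ha w]

theorem act_comp_congr {a a' b b' : Term} (ha : act a = act a') (hb : act b = act b') :
    act (comp a b) = act (comp a' b') := by
  funext w
  rw [act_comp, act_comp, ha, hb]

end Term

theorem AssocEq.act_eq {a b : Term} (h : AssocEq a b) : act a = act b := by
  induction h with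
  | assoc a b c => exact funext fun w => Option.bind_assoc (act a w) (act b) (act c)
  | refl => rfl
  | symm _ ih => exact ih.symm
  | trans _ _ ih₁ ih₂ => exact ih₁.trans ih₂
  | comp_congr _ _ ha hb => exact act_comp_congr ha hb
  | pair_congr _ _ ha hb => exact act_pair_congr ha hb

theorem Rule.act_eq {n : ℕ} {a b : Term} (hn : n ∈ rules15) (h : Rule n a b) : act a = act b := by
  cases h with
  | r1 => rfl
  | r2 => rfl
  | r3 => funext w; rcases w with _ | ⟨_ | _, w⟩ <;> rfl
  | r4 => rfl
  | r5 => exact funext fun w => Option.bind_fun_some (act b w)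
  | r6 => simp [rules15] at hn
  | r7 => simp [rules15] at hn

theorem Step.act_eq {a b : Term} (h : Step rules15 a b) : act a = act b := by
  induction h with
  | rule hn h => exact h.act_eq hn
  | comp_left _ ih => exact act_comp_congr ih rfl
  | comp_right _ ih => exact act_comp_congr rfl ih
  | pair_left _ ih => exact act_pair_congr ih rfl
  | pair_right _ ih => exact act_pair_congr rfl ih

theorem Red.act_eq {a b : Term} (h : Red rules15 a b) : act a = act b := by
  obtain ⟨c, h, hc⟩ := h
  rw [← hc.act_eq]
  clear hc
  induction h with
  | refl => rfl
  | tail _ h ih =>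
    obtain ⟨a', b', h₁, h₂, h₃⟩ := h
    rw [ih, h₁.act_eq, h₂.act_eq, h₃.act_eq]

section Reduction

variable {J : Set ℕ} {a b c : Term}

theorem AssocEq.red (h : AssocEq a b) : Red J a b := ⟨a, .refl, h⟩

theorem Step.red (h : Step J a b) : Red J a b :=
  ⟨b, .single ⟨a, b, .refl a, h, .refl b⟩, .refl b⟩

namespace Red

theorem refl (a : Term) : Red J a a := (AssocEq.refl a).red

theorem trans (h : Red J a b) (h' : Red J b c) : Red J a c := by
  obtain ⟨x, hx, hxb⟩ := h
  obtain ⟨y, hy, hyc⟩ := h'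
  rcases Relation.ReflTransGen.cases_head hy with rfl | ⟨z, ⟨b', z', hb, hz, hz'⟩, hzy⟩
  · exact ⟨x, hx, hxb.trans hyc⟩
  · exact ⟨y, hx.trans (.head ⟨b', z', hxb.trans hb, hz, hz'⟩ hzy), hyc⟩

theorem comp_left (h : Red J a b) (c : Term) : Red J (comp a c) (comp b c) := by
  obtain ⟨d, h, hd⟩ := h
  refine ⟨comp d c, ?_, .comp_congr hd (.refl c)⟩
  refine Relation.ReflTransGen.lift (comp · c) (fun x y ⟨x', y', h₁, h₂, h₃⟩ => ?_) _ _ h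
  exact ⟨comp x' c, comp y' c, .comp_congr h₁ (.refl c), .comp_left h₂, .comp_congr h₃ (.refl c)⟩

end Red

end Reduction

namespace Term

/-- The shift with a single letter, encoded as in `act`. -/
def letter : Bool → Term
  | true => L
  | false => R

/-- The product of the shift with word `w` and the term `X`, without a redundant factor `I`. -/
def shiftMul : List Bool → Term → Term
  | [], X => X
  | c :: w, X => comp (shiftMul w (letter c)) X

/-- The shift with a given word of letters, encoded as in `act`. -/
def ofWord : List Bool → Term
  | [] => I
  | c :: w => shiftMul w (letter c)

theorem red_comp_ofWord (w : List Bool) (X : Term) :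
    Red rules15 (comp (ofWord w) X) (shiftMul w X) := by
  cases w with
  | nil => exact (Step.rule (n := 4) (by simp [rules15]) (.r4 X)).red
  | cons c w => exact .refl _

theorem step_letter_comp_pair (c : Bool) (a b : Term) :
    Step rules15 (comp (letter c) (pair a b)) (bif c then a else b) := by
  cases c
  · exact .rule (n := 2) (by simp [rules15]) (.r2 a b)
  · exact .rule (n := 1) (by simp [rules15]) (.r1 a b)

theorem red_shiftMul_pair (c : Bool) (w : List Bool) (a b : Term) :
    Red rules15 (shiftMul (c :: w) (pair a b)) (shiftMul w (bif c then a else b)) := by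
  cases w with
  | nil => exact (step_letter_comp_pair c a b).red
  | cons d w => exact (AssocEq.assoc ..).red.trans (step_letter_comp_pair c a b).comp_right.red

theorem red_shiftMul_comp (w : List Bool) (a b : Term) :
    Red rules15 (shiftMul w (comp a b)) (comp (shiftMul w a) b) := by
  cases w with
  | nil => exact .refl _
  | cons c w => exact (AssocEq.assoc ..).symm.red

theorem red_shiftMul_of_act_eq_some {X : Term} {w w' : List Bool} (h : act X w = some w') :
    Red rules15 (shiftMul w X) (ofWord w') := by
  induction X generalizing w w' with
  | I =>
    obtain rfl : w = w' := Option.some.inj h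
    cases w with
    | nil => exact .refl _
    | cons c w => exact (Step.rule (n := 5) (by simp [rules15]) (.r5 _)).red
  | L =>
    obtain rfl : true :: w = w' := Option.some.inj h
    exact .refl _
  | R =>
    obtain rfl : false :: w = w' := Option.some.inj h
    exact .refl _
  | comp a b iha ihb =>
    obtain ⟨w₁, ha, hb⟩ := Option.bind_eq_some_iff.1 h
    exact (red_shiftMul_comp w a b).trans <| ((iha ha).comp_left b).trans <|
      (red_comp_ofWord w₁ b).trans (ihb hb)
  | pair a b iha ihb =>
    rcases w with _ | ⟨_ | _, w⟩
    · cases h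
    · exact (red_shiftMul_pair false w a b).trans (ihb h)
    · exact (red_shiftMul_pair true w a b).trans (iha h)

/-- Products of one or more letters `L` and `R`. -/
def IsLetterProduct : Term → Prop
  | I => False
  | L => True
  | R => True
  | comp a b => a.IsLetterProduct ∧ b.IsLetterProduct
  | pair _ _ => False

theorem isLetterProduct_letter (c : Bool) : (letter c).IsLetterProduct := by
  cases c <;> trivial

theorem isLetterProduct_shiftMul {X : Term} (hX : X.IsLetterProduct) (w : List Bool) :
    (shiftMul w X).IsLetterProduct := by
  induction w generalizing X with
  | nil => exact hX
  | cons c w ih => exact ⟨ih (isLetterProduct_letter c), hX⟩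

theorem IsLetterProduct.isShift {X : Term} (hX : X.IsLetterProduct) : IsShift X := by
  induction X with
  | I => exact .unit
  | L => exact .left
  | R => exact .right
  | comp a b iha ihb => exact .comp (iha hX.1) (ihb hX.2)
  | pair => exact hX.elim

end Term

theorem AssocEq.isLetterProduct_iff {a b : Term} (h : AssocEq a b) :
    a.IsLetterProduct ↔ b.IsLetterProduct := by
  induction h with
  | assoc => exact and_assoc
  | refl => rfl
  | symm _ ih => exact ih.symm
  | trans _ _ ih₁ ih₂ => exact ih₁.trans ih₂
  | comp_congr _ _ ha hb => exact and_congr ha hb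
  | pair_congr => rfl

theorem AssocEq.eq_I_iff {a b : Term} (h : AssocEq a b) : a = I ↔ b = I := by
  induction h with
  | refl => rfl
  | symm _ ih => exact ih.symm
  | trans _ _ ih₁ ih₂ => exact ih₁.trans ih₂
  | _ => simp

theorem Step.not_isLetterProduct {J : Set ℕ} {a b : Term} (h : Step J a b) :
    ¬ a.IsLetterProduct := by
  induction h with
  | rule _ hr => cases hr <;> simp [IsLetterProduct]
  | comp_left _ ih => exact fun h => ih h.1
  | comp_right _ ih => exact fun h => ih h.2
  | pair_left => exact id
  | pair_right => exact id

namespace Term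

theorem IsLetterProduct.nf {J : Set ℕ} {X : Term} (hX : X.IsLetterProduct) : NF J X :=
  fun _ ⟨_, _, hassoc, hstep, _⟩ => hstep.not_isLetterProduct (hassoc.isLetterProduct_iff.1 hX)

theorem nf_I {J : Set ℕ} : NF J I := by
  rintro _ ⟨x, _, hassoc, hstep, -⟩
  obtain rfl := hassoc.eq_I_iff.1 rfl
  cases hstep with
  | rule _ h => cases h

theorem nf_ofWord {J : Set ℕ} : ∀ w, NF J (ofWord w)
  | [] => nf_I
  | c :: w => (isLetterProduct_shiftMul (isLetterProduct_letter c) w).nf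

theorem isShift_ofWord : ∀ w, IsShift (ofWord w)
  | [] => .unit
  | c :: w => (isLetterProduct_shiftMul (isLetterProduct_letter c) w).isShift

theorem act_letter (c : Bool) (w : List Bool) : act (letter c) w = some (c :: w) := by
  cases c <;> rfl

theorem act_shiftMul (w : List Bool) (X : Term) : act (shiftMul w X) [] = act X w := by
  induction w generalizing X with
  | nil => rfl
  | cons c w ih => rw [shiftMul, act_comp, ih, act_letter, Option.bind_some]

theorem act_ofWord (w : List Bool) : act (ofWord w) [] = some w := by
  cases w with
  | nil => rfl
  | cons c w => rw [ofWord, act_shiftMul, act_letter]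

end Term

theorem IsShift.exists_act_eq_some {S : Term} (h : IsShift S) (w : List Bool) :
    ∃ w', act S w = some w' := by
  induction h generalizing w with
  | unit => exact ⟨_, rfl⟩
  | left => exact ⟨_, rfl⟩
  | right => exact ⟨_, rfl⟩
  | comp _ _ ihs iht =>
    obtain ⟨w₁, h₁⟩ := ihs w
    rw [act_comp, h₁]
    exact iht w₁

theorem nfIsShift_iff_act_ne_none {X : Term} : nfIsShift X ↔ act X [] ≠ none := by
  constructor
  · rintro ⟨N, hred, -, hN⟩
    obtain ⟨w, hw⟩ := hN.exists_act_eq_some []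
    simp [hred.act_eq, hw]
  · intro h
    obtain ⟨w, hw⟩ := Option.ne_none_iff_exists'.1 h
    exact ⟨ofWord w, red_shiftMul_of_act_eq_some (w := []) hw, nf_ofWord w, isShift_ofWord w⟩

/-- The Baire category theorem for `ℕ → β`, phrased with finite initial segments. -/
theorem exists_seq_forall_exists_map_range {β ι : Type*} [Nonempty β] [Countable ι]
    {P : ι → List β → Prop} (h : ∀ i l, ∃ l', P i (l ++ l')) :
    ∃ f : ℕ → β, ∀ i, ∃ n, P i ((List.range n).map f) := by
  let _ : TopologicalSpace β := ⊥
  have : DiscreteTopology β := ⟨rfl⟩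
  let U (i : ι) : Set (ℕ → β) := {f | ∃ n, P i ((List.range n).map f)}
  have hopen (i : ι) : IsOpen (U i) := by
    refine isOpen_iff_forall_mem_open.2 fun f ⟨n, hn⟩ =>
      ⟨PiNat.cylinder f n, fun g hg => ⟨n, ?_⟩, PiNat.isOpen_cylinder _ f n,
        PiNat.self_mem_cylinder f n⟩
    convert hn using 1
    exact List.map_congr_left fun k hk => hg k (List.mem_range.1 hk)
  have hdense (i : ι) : Dense (U i) := by
    refine (PiNat.isTopologicalBasis_cylinders _).dense_iff.2 ?_
    rintro _ ⟨f, n, rfl⟩ -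
    obtain ⟨l', hl'⟩ := h i ((List.range n).map f)
    let l := (List.range n).map f ++ l'
    refine ⟨fun k => l.getD k (f k), fun k hk => ?_, l.length, ?_⟩
    · simp [l, List.getElem?_append_left, hk]
    · convert hl'
      exact List.ext_getElem (by simp [l]) fun k _ hk => by simp [List.getElem?_eq_getElem hk, l]
  obtain ⟨f, hf⟩ := (dense_iInter_of_isOpen hopen hdense).nonempty
  exact ⟨f, fun i => Set.mem_iInter.1 hf i⟩

section Covering

variable {B : List Term} {w w' : List Bool}

theorem act_listProd_append (l l' : List Term) (w : List Bool) :
    act (listProd (l ++ l')) w = (act (listProd l) w).bind (act (listProd l')) := by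
  induction l generalizing w with
  | nil => rfl
  | cons t l ih =>
    simp only [List.cons_append, listProd, act_comp, Option.bind_assoc]
    exact congrArg _ (funext ih)

theorem mem_shortWords_flatMap_rules :
    w ∈ PrefixSystem.shortWords (B.flatMap rules) ↔ ∃ t ∈ B, act t w = none := by
  simp only [PrefixSystem.shortWords, List.flatMap_assoc, List.mem_flatMap (b := w) (l := B),
    (rules_computes _ w).1]

theorem rewrites_flatMap_rules :
    PrefixSystem.Rewrites (B.flatMap rules) w w' ↔ ∃ t ∈ B, act t w = some w' := by
  simp only [(rules_computes _ w).2, PrefixSystem.Rewrites, List.mem_flatMap]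
  constructor
  · rintro ⟨r, ⟨t, ht, hr⟩, h⟩
    exact ⟨t, ht, r, hr, h⟩
  · rintro ⟨t, ht, r, hr, h⟩
    exact ⟨r, ⟨t, ht, hr⟩, h⟩

theorem mortal_flatMap_rules_iff : PrefixSystem.Mortal (B.flatMap rules) w ↔
    ∃ l : List Term, (∀ t ∈ l, t ∈ B) ∧ act (listProd l) w = none := by
  constructor
  · rintro ⟨y, hy, h⟩
    induction h using Relation.ReflTransGen.head_induction_on with
    | refl =>
      obtain ⟨t, ht, hty⟩ := mem_shortWords_flatMap_rules.1 hy
      exact ⟨[t], by simpa, by simp [listProd, act_comp, hty]⟩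
    | head h _ ih =>
      obtain ⟨t, ht, htw⟩ := rewrites_flatMap_rules.1 h
      obtain ⟨l, hl, hlw⟩ := ih
      exact ⟨t :: l, by simpa [ht] using hl, by rwa [listProd, act_comp, htw]⟩
  · rintro ⟨l, hl, h⟩
    induction l generalizing w with
    | nil => cases h
    | cons t l ih =>
      obtain ⟨ht, hl⟩ := List.forall_mem_cons.1 hl
      rcases hw : act t w with _ | w₁
      · exact ⟨w, mem_shortWords_flatMap_rules.2 ⟨t, ht, hw⟩, .refl⟩
      · obtain ⟨y, hy, hwy⟩ := ih hl (w := w₁) (by rwa [listProd, act_comp, hw] at h)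
        exact ⟨y, hy, .head (rewrites_flatMap_rules.2 ⟨t, ht, hw⟩) hwy⟩

theorem covers_iff_act : Covers B ↔
    ∃ f : ℕ → Term, (∀ n, f n ∈ B) ∧ ∀ w, ∃ n, act (prodTake f n) w = none := by
  simp only [Covers, nfIsShift_iff_act_ne_none, not_not, act_comp]
  refine exists_congr fun f => and_congr_right fun _ => ⟨fun h w => ?_, fun h S hS => ?_⟩
  · simpa [act_ofWord] using h (ofWord w) (isShift_ofWord w)
  · obtain ⟨w, hw⟩ := hS.exists_act_eq_some []
    simpa [hw] using h w

theorem covers_iff_forall_mortal :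
    Covers B ↔ ∀ w, PrefixSystem.Mortal (B.flatMap rules) w := by
  simp only [covers_iff_act, mortal_flatMap_rules_iff]
  constructor
  · rintro ⟨f, hf, h⟩ w
    obtain ⟨n, hn⟩ := h w
    exact ⟨(List.range n).map f, by simp [hf], hn⟩
  · intro h
    have : Nonempty {t // t ∈ B} := by
      obtain ⟨_ | ⟨t, l⟩, hl, h₀⟩ := h []
      · cases h₀
      · exact ⟨t, hl t (by simp)⟩
    have hext (w : List Bool) (l : List {t // t ∈ B}) :
        ∃ l' : List {t // t ∈ B}, act (listProd ((l ++ l').map Subtype.val)) w = none := by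
      rcases hw : act (listProd (l.map Subtype.val)) w with _ | w₁
      · exact ⟨[], by simpa using hw⟩
      · obtain ⟨l', hl', h'⟩ := h w₁
        lift l' to List {t // t ∈ B} using hl'
        exact ⟨l', by simp only [List.map_append, act_listProd_append, hw, Option.bind_some, h']⟩
    obtain ⟨f, hf⟩ := exists_seq_forall_exists_map_range
      (P := fun w l => act (listProd (l.map Subtype.val)) w = none) hext
    exact ⟨fun n => f n, fun n => (f n).2, fun w => by
      simpa [prodTake, Function.comp_def] using hf w⟩

end Covering

section Encoding

/-- The inverse of `encodeTerm`. -/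
def decodeTerm : ℕ → Term
  | 0 => I
  | 1 => L
  | 2 => R
  | n + 3 =>
    have : (n / 2).unpair.1 < n + 3 := by have := Nat.unpair_left_le (n / 2); omega
    have : (n / 2).unpair.2 < n + 3 := by have := Nat.unpair_right_le (n / 2); omega
    let a := decodeTerm (n / 2).unpair.1
    let b := decodeTerm (n / 2).unpair.2
    if n % 2 = 0 then comp a b else pair a b

theorem decodeTerm_encodeTerm (t : Term) : decodeTerm (encodeTerm t) = t := by
  induction t with
  | I | L | R => simp [encodeTerm, decodeTerm]
  | comp a b iha ihb => simp [encodeTerm, decodeTerm, iha, ihb]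
  | pair a b iha ihb =>
    have h (m : ℕ) : (2 * m + 1) / 2 = m := by omega
    simp [encodeTerm, decodeTerm, iha, ihb, h]

theorem encodeTerm_decodeTerm (n : ℕ) : encodeTerm (decodeTerm n) = n := by
  fun_induction decodeTerm n with
  | case1 | case2 | case3 => rfl
  | case4 n _ _ a b _ iha ihb =>
    rw [encodeTerm, iha, ihb, Nat.pair_unpair]
    omega
  | case5 n _ _ a b _ iha ihb =>
    rw [encodeTerm, iha, ihb, Nat.pair_unpair]
    omega

instance : Denumerable Term :=
  Denumerable.mk' ⟨encodeTerm, decodeTerm, decodeTerm_encodeTerm, encodeTerm_decodeTerm⟩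

theorem encode_termList (B : List Term) : Encodable.encode B = encodeTermList B := by
  induction B with
  | nil => rfl
  | cons t B ih => rw [Encodable.encode_list_cons, ih]; rfl

open Primrec in
theorem primrec_of_term_rec {σ : Type*} [Primcodable σ] {f : Term → σ} {c p : σ → σ → σ}
    (hc : Primrec₂ c) (hp : Primrec₂ p) (hcomp : ∀ a b, f (comp a b) = c (f a) (f b))
    (hpair : ∀ a b, f (pair a b) = p (f a) (f b)) : Primrec f := by
  -- `next l` is the value of `f` at the term with code `l.length`, computed from the list `l` of
  -- its values at the terms with smaller codes.
  let node (x y : σ) (n : ℕ) : σ := if n % 2 = 0 then c x y else p x y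
  let code (l : List σ) : ℕ := l.length - 3
  let next (l : List σ) : Option σ :=
    [f I, f L, f R][l.length]? <|> (l[(code l / 2).unpair.1]?).bind fun x =>
      (l[(code l / 2).unpair.2]?).map fun y => node x y (code l)
  have hcode : Primrec code := nat_sub.comp list_length (const 3)
  have hunpair : Primrec fun l => (code l / 2).unpair := unpair.comp (nat_div.comp hcode (const 2))
  have hnode : Primrec fun q : (List σ × σ) × σ => node q.1.2 q.2 (code q.1.1) :=
    .ite (Primrec.eq.comp (nat_mod.comp (hcode.comp (fst.comp fst)) (const 2)) (const 0))
      (hc.comp (snd.comp fst) snd) (hp.comp (snd.comp fst) snd)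
  have hnext : Primrec next :=
    option_orElse.comp (list_getElem?.comp (const _) list_length) <|
      option_bind (list_getElem?.comp Primrec.id (fst.comp hunpair)) <|
        option_map (list_getElem?.comp fst (snd.comp (hunpair.comp fst))) hnode
  have hrec (n : ℕ) : next ((List.range n).map (f ∘ decodeTerm)) = some (f (decodeTerm n)) := by
    fun_cases decodeTerm n with
    | case1 | case2 | case3 => simp [next]
    | case4 n ha hb a b h => simp [next, node, code, ha, hb, h, hcomp, a, b]
    | case5 n ha hb a b h => simp [next, node, code, ha, hb, h, hpair, a, b]
  have hdecode : Primrec (f ∘ decodeTerm) :=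
    (nat_strong_rec (fun _ : Unit => f ∘ decodeTerm) (hnext.comp snd).to₂ fun _ => hrec).comp
      (const ()) Primrec.id
  exact (hdecode.comp Primrec.encode).of_eq fun t => congrArg f (decodeTerm_encodeTerm t)

end Encoding

section Decidability

open Primrec

theorem primrec_compose {α : Type*} [Primcodable α] [DecidableEq α] :
    Primrec₂ (PrefixSystem.compose : PrefixSystem α → PrefixSystem α → PrefixSystem α) := by
  have hleft : Primrec fun q : (List α × List α) × (List α × List α) =>
      (q.1.2.dropPrefix? q.2.1).map fun x => (q.1.1, q.2.2 ++ x) :=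
    option_map (primrec_dropPrefix?.comp (snd.comp fst) (fst.comp snd))
      (Primrec.pair (fst.comp (fst.comp fst)) (list_append.comp (snd.comp (snd.comp fst)) snd))
  have hright : Primrec fun q : (List α × List α) × (List α × List α) =>
      (q.2.1.dropPrefix? q.1.2).map fun y => (q.1.1 ++ y, q.2.2) :=
    option_map (primrec_dropPrefix?.comp (fst.comp snd) (snd.comp fst))
      (Primrec.pair (list_append.comp (fst.comp (fst.comp fst)) snd) (snd.comp (snd.comp fst)))
  exact list_flatMap fst <| list_flatMap (snd.comp fst) <|
    (list_append.comp (optionToList.comp hleft) (optionToList.comp hright)).comp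
      (Primrec.pair (snd.comp fst) snd)

theorem primrec_branch : Primrec₂ PrefixSystem.branch := by
  have hcons (c : Bool) : Primrec fun S : PrefixSystem Bool => S.map fun r => (c :: r.1, r.2) :=
    list_map Primrec.id
      (Primrec.pair (list_cons.comp (const c) (fst.comp snd)) (snd.comp snd))
  exact list_append.comp ((hcons true).comp fst) ((hcons false).comp snd)

theorem primrec_rules : Primrec rules :=
  primrec_of_term_rec primrec_compose primrec_branch (fun _ _ => rfl) fun _ _ => rfl

theorem primrecPred_covers : PrimrecPred Covers :=
  have hsystem : Primrec fun B : List Term => B.flatMap rules :=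
    list_flatMap Primrec.id (primrec_rules.comp₂ .right)
  (PrefixSystem.primrecPred_forall_mortal.comp hsystem).of_eq fun _ => covers_iff_forall_mortal.symm

end Decidability

theorem covers_cantor_space_decidable_general :
    ∃ g : ℕ → Bool, Primrec g ∧ ∀ B : List Term, g (encodeTermList B) = true ↔ Covers B := by
  classical
  refine ⟨fun n => decide (Covers (Denumerable.ofNat (List Term) n)),
    (primrecPred_covers.comp (Primrec.ofNat _)).decide, fun B => ?_⟩
  rw [decide_eq_true_iff, ← encode_termList, Denumerable.ofNat_encode]

/-- Theorem 5: it is decidable (uniformly in the finite set `B` of terms in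
CQ normal form) whether `B` covers Cantor space. -/
theorem covers_cantor_space_decidable :
    ∃ g : ℕ → Bool, Computable g ∧
      ∀ B : List Term, (∀ t ∈ B, NF rules15 t) →
        (g (encodeTermList B) = true ↔ Covers B) :=
  let ⟨g, hg, h⟩ := covers_cantor_space_decidable_general
  ⟨g, hg.to_comp, fun B _ => h B⟩
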